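/- arXiv:2511.09417 — 3 statements merged into one kernel-verified Lean document; each statement's English description precedes it below -/
import Mathlib

section
/- Deterministic monotonicity of the weight-based measure: let Λ be a linear map from complex matrices indexed by Fin m × Fin n to complex matrices indexed by Fin m' × Fin n' that maps positive semidefinite matrices to positive semidefinite matrices, preserves the trace, and maps every separable state on ℂ^m ⊗ ℂ^n to a separable state on ℂ^{m'} ⊗ ℂ^{n'}. Then for every state J on ℂ^m ⊗ ℂ^n, C_w(Λ(J)) ≤ C_w(J). -/
/-!
If `s` is feasible for `J`, with separable state `σ`, then `Λ (J - (1 - s) • σ)` is positive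
semidefinite and equals `Λ J - (1 - s) • Λ σ` by linearity, so `s` is feasible for `Λ J` with
separable state `Λ σ`. Thus the feasible set only grows, and its infimum can only decrease.
Since the real `sInf` of the empty set is `0`, the feasible set of `J` must also be shown to be
nonempty: `s = 1` is feasible as soon as a separable state exists, and one does because `J`
has nonzero trace, which forces both factors to be nonempty.
-/

open Matrix BigOperators
open scoped ComplexOrder

/-- A quantum state: positive semidefinite matrix of trace 1. -/
def MatState {ι : Type*} [Fintype ι] (ρ : Matrix ι ι ℂ) : Prop :=
  ρ.PosSemidef ∧ ρ.trace = 1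

/-- A separable state on a bipartite system `A ⊗ B`: a finite convex combination of
Kronecker products of states. -/
def SepState {A B : Type*} [Fintype A] [Fintype B]
    (σ : Matrix (A × B) (A × B) ℂ) : Prop :=
  ∃ (k : ℕ) (p : Fin k → ℝ) (ρ : Fin k → Matrix A A ℂ) (τ : Fin k → Matrix B B ℂ),
    (∀ i, 0 ≤ p i) ∧ (∑ i, p i = 1) ∧ (∀ i, MatState (ρ i)) ∧ (∀ i, MatState (τ i)) ∧
    σ = ∑ i, (p i : ℂ) • Matrix.kroneckerMap (· * ·) (ρ i) (τ i)

/-- The weight-based measure of a bipartite state `J`: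
`C_w(J) = inf { s ∈ [0,1] : ∃ separable state σ, J - (1-s)·σ ⪰ 0 }`. -/
noncomputable def Cw {A B : Type*} [Fintype A] [Fintype B]
    (J : Matrix (A × B) (A × B) ℂ) : ℝ :=
  sInf {s : ℝ | 0 ≤ s ∧ s ≤ 1 ∧ ∃ σ, SepState σ ∧
    (J - (((1 - s : ℝ) : ℂ)) • σ).PosSemidef}

/-- The pure basis state `|i⟩⟨i|`. -/
lemma matState_diagonal_single {ι : Type*} [Fintype ι] [DecidableEq ι] (i : ι) :
    MatState (Matrix.diagonal (Pi.single i (1 : ℂ))) := by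
  refine ⟨Matrix.PosSemidef.diagonal ?_, by simp [Matrix.trace_diagonal]⟩
  exact Pi.single_nonneg.2 zero_le_one

lemma exists_sepState {A B : Type*} [Fintype A] [Fintype B] (a : A) (b : B) :
    ∃ σ : Matrix (A × B) (A × B) ℂ, SepState σ := by
  classical
  exact ⟨_, 1, fun _ => 1, fun _ => Matrix.diagonal (Pi.single a 1),
    fun _ => Matrix.diagonal (Pi.single b 1), fun _ => zero_le_one, by simp,
    fun _ => matState_diagonal_single a, fun _ => matState_diagonal_single b, rfl⟩

/-- Deterministic monotonicity of the weight-based measure under a positive,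
trace-preserving, separability-preserving linear map. -/
theorem weight_measure_monotone {m n m' n' : ℕ}
    (Λ : Matrix (Fin m × Fin n) (Fin m × Fin n) ℂ →ₗ[ℂ]
        Matrix (Fin m' × Fin n') (Fin m' × Fin n') ℂ)
    (hpos : ∀ A, A.PosSemidef → (Λ A).PosSemidef)
    (htr : ∀ A, (Λ A).trace = A.trace)
    (hsep : ∀ σ, SepState σ → SepState (Λ σ))
    (J : Matrix (Fin m × Fin n) (Fin m × Fin n) ℂ) (hJ : MatState J) :
    Cw (Λ J) ≤ Cw J := by
  unfold Cw
  apply csInf_le_csInf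
  · exact ⟨0, fun s hs => hs.1⟩
  · have hne : Nonempty (Fin m × Fin n) := by
      by_contra h
      rw [not_nonempty_iff] at h
      have h1 := hJ.2
      simp [Matrix.trace] at h1
    obtain ⟨a, b⟩ := hne
    obtain ⟨σ, hσ⟩ := exists_sepState a b
    exact ⟨1, zero_le_one, le_rfl, σ, hσ, by simpa using hJ.1⟩
  · rintro s ⟨h0, h1, σ, hσ, hJσ⟩
    refine ⟨h0, h1, Λ σ, hsep σ hσ, ?_⟩
    rw [← map_smul, ← map_sub]
    exact hpos _ hJσ
end

section
/- Tensor subadditivity of the weight-based measure: let J₁ be a state on ℂ^{m₁} ⊗ ℂ^{n₁} and J₂ a state on ℂ^{m₂} ⊗ ℂ^{n₂}. Let J denote the matrix obtained from the Kronecker product J₁ ⊗ J₂ by reindexing along the equivalence ((Fin m₁ × Fin n₁) × (Fin m₂ × Fin n₂)) ≃ ((Fin m₁ × Fin m₂) × (Fin n₁ × Fin n₂)) that groups the two input factors together and the two output factors together; J is a state on ℂ^{m₁ m₂} ⊗ ℂ^{n₁ n₂}. Then C_w(J) ≤ C_w(J₁) + C_w(J₂) − C_w(J₁)·C_w(J₂).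 -/
/-!
Write the claim as `1 - C_w(J) ≥ (1 - C_w(J₁)) (1 - C_w(J₂))`. If `s` and `t` are feasible for `J₁`
and `J₂`, with separable witnesses `σ₁` and `σ₂`, then with `a = 1 - s` and `b = 1 - t`

  `J₁ ⊗ J₂ - a b • (σ₁ ⊗ σ₂) = (J₁ - a • σ₁) ⊗ J₂ + (a • σ₁) ⊗ (J₂ - b • σ₂)`

is a sum of Kronecker products of positive semidefinite matrices (`posSemidef_sub_tensor`), and the
regrouping of `σ₁ ⊗ σ₂` is separable (`SepState.tensor`). Hence `s + t - s t` is feasible for `J`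
(`CwSet.tensor`). The inequality `C_w(J) ≤ s + t - s t` is a closed condition on `(s, t)`, so it
extends from the feasible pairs to the pair of infima. The feasible sets are nonempty because
every space carrying a state also carries a separable state, which makes `1` feasible.
-/

open Matrix BigOperators
open scoped ComplexOrder

/-- The set of feasible parameters `s` whose infimum is `Cw J`. -/
def CwSet {A B : Type*} [Fintype A] [Fintype B] (J : Matrix (A × B) (A × B) ℂ) : Set ℝ :=
  {s : ℝ | 0 ≤ s ∧ s ≤ 1 ∧ ∃ σ, SepState σ ∧ (J - (((1 - s : ℝ) : ℂ)) • σ).PosSemidef}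

/-- The Kronecker product of two bipartite matrices, with the first factors and the second factors
grouped together. -/
def groupedTensor {A B C D : Type*} (X : Matrix (A × B) (A × B) ℂ)
    (Y : Matrix (C × D) (C × D) ℂ) : Matrix ((A × C) × (B × D)) ((A × C) × (B × D)) ℂ :=
  Matrix.reindex (Equiv.prodProdProdComm A B C D) (Equiv.prodProdProdComm A B C D)
    (Matrix.kroneckerMap (· * ·) X Y)

lemma groupedTensor_apply {A B C D : Type*} (X : Matrix (A × B) (A × B) ℂ)
    (Y : Matrix (C × D) (C × D) ℂ) (x y : (A × C) × (B × D)) :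
    groupedTensor X Y x y =
      X (x.1.1, x.2.1) (y.1.1, y.2.1) * Y (x.1.2, x.2.2) (y.1.2, y.2.2) := rfl

lemma posSemidef_groupedTensor {A B C D : Type*} [Fintype A] [Fintype B] [Fintype C] [Fintype D]
    {X : Matrix (A × B) (A × B) ℂ} {Y : Matrix (C × D) (C × D) ℂ}
    (hX : X.PosSemidef) (hY : Y.PosSemidef) : (groupedTensor X Y).PosSemidef := by
  classical
  exact (hX.kronecker hY).submatrix _

lemma MatState.kronecker {A B : Type*} [Fintype A] [Fintype B]
    {ρ : Matrix A A ℂ} {τ : Matrix B B ℂ} (hρ : MatState ρ) (hτ : MatState τ) :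
    MatState (Matrix.kroneckerMap (· * ·) ρ τ) := by
  classical
  refine ⟨hρ.1.kronecker hτ.1, ?_⟩
  have := Matrix.trace_kronecker ρ τ
  rw [hρ.2, hτ.2, one_mul] at this
  exact this

lemma SepState.posSemidef {A B : Type*} [Fintype A] [Fintype B]
    {σ : Matrix (A × B) (A × B) ℂ} (h : SepState σ) : σ.PosSemidef := by
  obtain ⟨k, p, ρ, τ, hp, -, hρ, hτ, rfl⟩ := h
  exact Matrix.posSemidef_sum _ fun i _ =>
    ((hρ i).kronecker (hτ i)).1.smul (Complex.zero_le_real.mpr (hp i))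

/-- Grouped tensor products preserve separability: expanding both convex combinations, each term
`(ρ ⊗ τ) ⊗ (ρ' ⊗ τ')` regroups to `(ρ ⊗ ρ') ⊗ (τ ⊗ τ')`, with product weights. -/
lemma SepState.tensor {A B C D : Type*} [Fintype A] [Fintype B] [Fintype C] [Fintype D]
    {σ₁ : Matrix (A × B) (A × B) ℂ} {σ₂ : Matrix (C × D) (C × D) ℂ}
    (h₁ : SepState σ₁) (h₂ : SepState σ₂) : SepState (groupedTensor σ₁ σ₂) := by
  obtain ⟨k, p, ρ, τ, hp, hp1, hρ, hτ, rfl⟩ := h₁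
  obtain ⟨l, q, ρ', τ', hq, hq1, hρ', hτ', rfl⟩ := h₂
  let e : Fin (k * l) ≃ Fin k × Fin l := finProdFinEquiv.symm
  refine ⟨k * l, fun i => p (e i).1 * q (e i).2,
    fun i => Matrix.kroneckerMap (· * ·) (ρ (e i).1) (ρ' (e i).2),
    fun i => Matrix.kroneckerMap (· * ·) (τ (e i).1) (τ' (e i).2),
    fun i => mul_nonneg (hp _) (hq _), ?_, fun i => (hρ _).kronecker (hρ' _),
    fun i => (hτ _).kronecker (hτ' _), ?_⟩
  · rw [Equiv.sum_comp e (fun x : Fin k × Fin l => p x.1 * q x.2), Fintype.sum_prod_type,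
      ← Finset.sum_mul_sum, hp1, hq1, one_mul]
  · rw [Equiv.sum_comp e (fun x : Fin k × Fin l => ((p x.1 * q x.2 : ℝ) : ℂ) •
      Matrix.kroneckerMap (· * ·) (Matrix.kroneckerMap (· * ·) (ρ x.1) (ρ' x.2))
        (Matrix.kroneckerMap (· * ·) (τ x.1) (τ' x.2))), Fintype.sum_prod_type]
    ext x y
    simp only [groupedTensor_apply, Matrix.sum_apply, Matrix.smul_apply, Matrix.kroneckerMap_apply,
      smul_eq_mul, Finset.sum_mul_sum, Complex.ofReal_mul]
    refine Finset.sum_congr rfl fun i _ => Finset.sum_congr rfl fun j _ => ?_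
    ring

lemma exists_matState (A : Type*) [Fintype A] [Nonempty A] : ∃ ρ : Matrix A A ℂ, MatState ρ := by
  classical
  obtain ⟨a⟩ := ‹Nonempty A›
  refine ⟨Matrix.diagonal (Pi.single a 1), Matrix.posSemidef_diagonal_iff.mpr fun i => ?_, ?_⟩
  · have h : (0 : A → ℂ) ≤ Pi.single a 1 := Pi.single_nonneg.mpr zero_le_one
    exact h i
  · simp [Matrix.trace_diagonal]

lemma CwSet.nonempty {A B : Type*} [Fintype A] [Fintype B] {J : Matrix (A × B) (A × B) ℂ}
    (h : MatState J) : (CwSet J).Nonempty := by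
  -- Trace 1 excludes an empty index set, on which there are no states at all.
  have hne : Nonempty (A × B) := by
    by_contra hE
    rw [not_nonempty_iff] at hE
    simpa [Matrix.trace] using h.2
  obtain ⟨a, b⟩ := hne
  have : Nonempty A := ⟨a⟩
  have : Nonempty B := ⟨b⟩
  obtain ⟨ρ, hρ⟩ := exists_matState A
  obtain ⟨τ, hτ⟩ := exists_matState B
  refine ⟨1, zero_le_one, le_rfl, Matrix.kroneckerMap (· * ·) ρ τ,
    ⟨1, fun _ => 1, fun _ => ρ, fun _ => τ, by simp, by simp, fun _ => hρ, fun _ => hτ, by simp⟩,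
    by simpa using h.1⟩

lemma CwSet.bddBelow {A B : Type*} [Fintype A] [Fintype B] (J : Matrix (A × B) (A × B) ℂ) :
    BddBelow (CwSet J) := ⟨0, fun _ hs => hs.1⟩

lemma posSemidef_sub_tensor {A B C D : Type*} [Fintype A] [Fintype B] [Fintype C] [Fintype D]
    {J₁ σ₁ : Matrix (A × B) (A × B) ℂ} {J₂ σ₂ : Matrix (C × D) (C × D) ℂ} {a b : ℂ}
    (hJ₂ : J₂.PosSemidef) (hσ₁ : σ₁.PosSemidef) (ha : 0 ≤ a)
    (h₁ : (J₁ - a • σ₁).PosSemidef) (h₂ : (J₂ - b • σ₂).PosSemidef) :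
    (groupedTensor J₁ J₂ - (a * b) • groupedTensor σ₁ σ₂).PosSemidef := by
  have key : groupedTensor J₁ J₂ - (a * b) • groupedTensor σ₁ σ₂ =
      groupedTensor (J₁ - a • σ₁) J₂ + groupedTensor (a • σ₁) (J₂ - b • σ₂) := by
    ext x y
    simp only [groupedTensor_apply, Matrix.sub_apply, Matrix.add_apply, Matrix.smul_apply,
      smul_eq_mul]
    ring
  rw [key]
  exact (posSemidef_groupedTensor h₁ hJ₂).add (posSemidef_groupedTensor (hσ₁.smul ha) h₂)

lemma CwSet.tensor {A B C D : Type*} [Fintype A] [Fintype B] [Fintype C] [Fintype D]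
    {J₁ : Matrix (A × B) (A × B) ℂ} {J₂ : Matrix (C × D) (C × D) ℂ} {s t : ℝ}
    (hJ₂ : J₂.PosSemidef) (hs : s ∈ CwSet J₁) (ht : t ∈ CwSet J₂) :
    s + t - s * t ∈ CwSet (groupedTensor J₁ J₂) := by
  obtain ⟨hs0, hs1, σ₁, hσ₁, h₁⟩ := hs
  obtain ⟨ht0, ht1, σ₂, hσ₂, h₂⟩ := ht
  refine ⟨by nlinarith, by nlinarith, groupedTensor σ₁ σ₂, hσ₁.tensor hσ₂, ?_⟩
  have ha : (0 : ℂ) ≤ ((1 - s : ℝ) : ℂ) := Complex.zero_le_real.mpr (by linarith)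
  have hab : ((1 - (s + t - s * t) : ℝ) : ℂ) = ((1 - s : ℝ) : ℂ) * ((1 - t : ℝ) : ℂ) := by
    push_cast
    ring
  rw [hab]
  exact posSemidef_sub_tensor hJ₂ hσ₁.posSemidef ha h₁ h₂

/-- Tensor subadditivity of the weight-based measure. The Choi state of the
tensor product channel is the Kronecker product `J₁ ⊗ J₂` reindexed so that the two input
factors and the two output factors are grouped together. -/
theorem weight_measure_tensor_subadditive {m₁ n₁ m₂ n₂ : ℕ}
    (J₁ : Matrix (Fin m₁ × Fin n₁) (Fin m₁ × Fin n₁) ℂ)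
    (J₂ : Matrix (Fin m₂ × Fin n₂) (Fin m₂ × Fin n₂) ℂ)
    (h₁ : MatState J₁) (h₂ : MatState J₂)
    (J : Matrix ((Fin m₁ × Fin m₂) × (Fin n₁ × Fin n₂))
        ((Fin m₁ × Fin m₂) × (Fin n₁ × Fin n₂)) ℂ)
    (hJ : J = Matrix.reindex (Equiv.prodProdProdComm (Fin m₁) (Fin n₁) (Fin m₂) (Fin n₂))
        (Equiv.prodProdProdComm (Fin m₁) (Fin n₁) (Fin m₂) (Fin n₂))
        (Matrix.kroneckerMap (· * ·) J₁ J₂)) :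
    Cw J ≤ Cw J₁ + Cw J₂ - Cw J₁ * Cw J₂ := by
  subst hJ
  change Cw (groupedTensor J₁ J₂) ≤ _
  -- The infima are limits of feasible pairs, and the bound below is closed in `(s, t)`.
  have hclosed : IsClosed {x : ℝ × ℝ | Cw (groupedTensor J₁ J₂) ≤ x.1 + x.2 - x.1 * x.2} :=
    isClosed_le (by fun_prop) (by fun_prop)
  have hsub : CwSet J₁ ×ˢ CwSet J₂ ⊆
      {x : ℝ × ℝ | Cw (groupedTensor J₁ J₂) ≤ x.1 + x.2 - x.1 * x.2} := fun _ hx =>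
    csInf_le (CwSet.bddBelow _) (CwSet.tensor h₂.1 hx.1 hx.2)
  have hmem : (Cw J₁, Cw J₂) ∈ closure (CwSet J₁ ×ˢ CwSet J₂) := by
    rw [closure_prod_eq]
    exact ⟨csInf_mem_closure (CwSet.nonempty h₁) (CwSet.bddBelow _),
      csInf_mem_closure (CwSet.nonempty h₂) (CwSet.bddBelow _)⟩
  exact closure_minimal hsub hclosed hmem
end

section
/- Eigenvalue lower bound for the weight-based measure of a quantum memory: let d ≥ 2 and let J be a state on ℂ^d ⊗ ℂ^d whose partial trace over the second factor equals (1/d)·I_d, i.e., for all i, i' ∈ Fin d, Σ_j J_{(i,j),(i',j)} = δ_{i,i'}/d (so J is the Choi state of a quantum channel with d-dimensional input). Let λ_max(J) denote the largest eigenvalue of J. Then C_w(J) ≥ (d·λ_max(J) − 1)/(d² − 1). -/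
/-!
Write `J = (1 - s) σ + R` with `σ` separable and `R` positive semidefinite, so that `tr R = s`.
Separable states satisfy the reduction criterion `σ ≤ σ_A ⊗ I`
(`SepState.ptrace_kronecker_one_sub_posSemidef`): for a product state it says `ρ ⊗ (I - τ) ≥ 0`,
and a positive semidefinite matrix is dominated by its trace times the identity
(`posSemidef_trace_smul_one_sub`). Tracing out the second factor of `J` gives
`(1 - s) σ_A ≤ J_A = I / d`, hence `(1 - s) σ ≤ I / d`. As also `R ≤ s I`, every eigenvalue of `J`
is at most `1 / d + s`, and `d λ - 1 ≤ d s ≤ (d² - 1) s` because `d ≥ 2`.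
-/


open Matrix BigOperators
open scoped ComplexOrder

/-- The partial trace over the second tensor factor. -/
def ptraceRight {A B : Type*} [Fintype B] (M : Matrix (A × B) (A × B) ℂ) : Matrix A A ℂ :=
  ∑ j, M.submatrix (fun i => (i, j)) (fun i => (i, j))

lemma ptraceRight_apply {A B : Type*} [Fintype B] (M : Matrix (A × B) (A × B) ℂ) (i i' : A) :
    ptraceRight M i i' = ∑ j, M (i, j) (i', j) := by
  simp [ptraceRight, Matrix.sum_apply]

lemma ptraceRight_posSemidef {A B : Type*} [Fintype B] {M : Matrix (A × B) (A × B) ℂ}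
    (hM : M.PosSemidef) : (ptraceRight M).PosSemidef :=
  posSemidef_sum _ fun _ _ => hM.submatrix _

/-- In an eigenbasis, each eigenvalue is bounded by the sum of all of them. -/
lemma posSemidef_trace_smul_one_sub {n : Type*} [Fintype n] [DecidableEq n] {M : Matrix n n ℂ}
    (hM : M.PosSemidef) : (M.trace • (1 : Matrix n n ℂ) - M).PosSemidef := by
  have hD : (M.trace • (1 : Matrix n n ℂ)
      - diagonal (fun i => (hM.1.eigenvalues i : ℂ))).PosSemidef := by
    rw [smul_one_eq_diagonal, diagonal_sub, posSemidef_diagonal_iff]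
    intro i
    rw [hM.1.trace_eq_sum_eigenvalues, sub_nonneg]
    exact Finset.single_le_sum (f := fun i => (hM.1.eigenvalues i : ℂ))
      (fun j _ => by exact_mod_cast hM.eigenvalues_nonneg j) (Finset.mem_univ i)
  have h := hD.mul_mul_conjTranspose_same (hM.1.eigenvectorUnitary : Matrix n n ℂ)
  have hs := hM.1.spectral_theorem
  rw [Unitary.conjStarAlgAut_apply] at hs
  have hU : (hM.1.eigenvectorUnitary : Matrix n n ℂ)
      * (hM.1.eigenvectorUnitary : Matrix n n ℂ)ᴴ = 1 :=
    Unitary.coe_mul_star_self hM.1.eigenvectorUnitary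
  rw [mul_sub, sub_mul, mul_smul_comm, mul_one, smul_mul_assoc, hU] at h
  convert h using 2
  exact hs

/-- The reduction criterion: a separable state satisfies `σ ≤ σ_A ⊗ I`. -/
lemma SepState.ptrace_kronecker_one_sub_posSemidef {A B : Type*} [Fintype A] [Fintype B]
    [DecidableEq B] {σ : Matrix (A × B) (A × B) ℂ} (hσ : SepState σ) :
    (kroneckerMap (· * ·) (ptraceRight σ) (1 : Matrix B B ℂ) - σ).PosSemidef := by
  obtain ⟨k, p, ρ, τ, hp, -, hρ, hτ, rfl⟩ := hσ
  have h : (∑ i, (p i : ℂ) • kroneckerMap (· * ·) (ρ i) (1 - τ i)).PosSemidef := by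
    refine posSemidef_sum _ fun i _ => ?_
    refine PosSemidef.smul ?_ (by exact_mod_cast hp i)
    refine (hρ i).1.kronecker ?_
    simpa [(hτ i).2] using posSemidef_trace_smul_one_sub (hτ i).1
  convert h using 1
  have hpt : ∀ a a', ptraceRight (∑ i, (p i : ℂ) • kroneckerMap (· * ·) (ρ i) (τ i)) a a'
      = ∑ i, (p i : ℂ) * ρ i a a' := by
    intro a a'
    simp only [ptraceRight_apply, Matrix.sum_apply, Matrix.smul_apply, kroneckerMap_apply,
      smul_eq_mul]
    rw [Finset.sum_comm]
    refine Finset.sum_congr rfl fun i _ => ?_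
    have ht : ∑ j, τ i j j = 1 := (hτ i).2
    rw [← Finset.mul_sum, ← Finset.mul_sum, ht, mul_one]
  ext ⟨a, b⟩ ⟨a', b'⟩
  simp only [Matrix.sub_apply, kroneckerMap_apply, hpt, Matrix.sum_apply, Matrix.smul_apply,
    smul_eq_mul, Finset.sum_mul, ← Finset.sum_sub_distrib]
  refine Finset.sum_congr rfl fun i _ => ?_
  ring

lemma eigenvalues_le_of_smul_one_sub_posSemidef {n : Type*} [Fintype n] [DecidableEq n]
    {M : Matrix n n ℂ} (hM : M.IsHermitian) {c : ℝ}
    (h : (((c : ℝ) : ℂ) • (1 : Matrix n n ℂ) - M).PosSemidef) (k : n) :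
    hM.eigenvalues k ≤ c := by
  have h1 := h.dotProduct_mulVec_nonneg (⇑(hM.eigenvectorBasis k))
  have hn : star (⇑(hM.eigenvectorBasis k)) ⬝ᵥ ⇑(hM.eigenvectorBasis k) = (1 : ℂ) := by
    rw [dotProduct_comm, ← EuclideanSpace.inner_eq_star_dotProduct]
    simp [inner_self_eq_norm_sq_to_K]
  rw [sub_mulVec, smul_mulVec, one_mulVec, hM.mulVec_eigenvectorBasis, dotProduct_sub,
    dotProduct_smul, dotProduct_smul, hn] at h1
  have h2 : (0 : ℂ) ≤ ((c - hM.eigenvalues k : ℝ) : ℂ) := by simpa using h1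
  have h3 : 0 ≤ c - hM.eigenvalues k := by exact_mod_cast h2
  linarith

lemma SepState.trace_eq_one {A B : Type*} [Fintype A] [Fintype B]
    {σ : Matrix (A × B) (A × B) ℂ} (hσ : SepState σ) : σ.trace = 1 := by
  obtain ⟨k, p, ρ, τ, -, hp, hρ, hτ, rfl⟩ := hσ
  have : ∀ i, (kroneckerMap (· * ·) (ρ i) (τ i)).trace = 1 := fun i => by
    rw [trace_kronecker, (hρ i).2, (hτ i).2, one_mul]
  simp only [trace_sum, trace_smul, this, smul_eq_mul, mul_one]
  exact_mod_cast hp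

/-- `J ≤ (1 / d + s) I` whenever `J = (1 - s) σ + R` with `σ` separable and `R ≥ 0`. -/
lemma choi_le_of_weight {d : ℕ} {J σ : Matrix (Fin d × Fin d) (Fin d × Fin d) ℂ}
    (hJ : J.trace = 1)
    (hptr : ∀ i i' : Fin d, ∑ j : Fin d, J (i, j) (i', j) =
        if i = i' then ((d : ℂ))⁻¹ else 0)
    {s : ℝ} (hs : s ≤ 1) (hσ : SepState σ)
    (hR : (J - (((1 - s : ℝ) : ℂ)) • σ).PosSemidef) :
    ((((d : ℝ)⁻¹ + s : ℝ) : ℂ) • (1 : Matrix (Fin d × Fin d) (Fin d × Fin d) ℂ) - J).PosSemidef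
    := by
  set R := J - (((1 - s : ℝ) : ℂ)) • σ with hRdef
  have htr : R.trace = (s : ℂ) := by
    rw [hRdef, trace_sub, trace_smul, hσ.trace_eq_one, hJ]
    push_cast
    simp
  have h1 := posSemidef_trace_smul_one_sub hR
  rw [htr] at h1
  have h2 := hσ.ptrace_kronecker_one_sub_posSemidef.smul
    (a := ((1 - s : ℝ) : ℂ)) (by exact_mod_cast sub_nonneg.2 hs)
  have h3 : (kroneckerMap (· * ·) (ptraceRight R) (1 : Matrix (Fin d) (Fin d) ℂ)).PosSemidef :=
    (ptraceRight_posSemidef hR).kronecker .one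
  convert (h1.add h2).add h3 using 1
  have hpt : ∀ a a', ptraceRight R a a'
      = (if a = a' then ((d : ℂ))⁻¹ else 0) - ((1 - s : ℝ) : ℂ) * ptraceRight σ a a' := by
    intro a a'
    rw [← hptr, ptraceRight_apply, ptraceRight_apply, Finset.mul_sum, ← Finset.sum_sub_distrib]
    rfl
  ext ⟨a, b⟩ ⟨a', b'⟩
  simp only [hRdef, Matrix.sub_apply, Matrix.add_apply, Matrix.smul_apply, kroneckerMap_apply,
    smul_eq_mul] at hpt ⊢
  rw [hpt]
  simp only [Matrix.one_apply, Prod.mk.injEq]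
  by_cases h : a = a' <;> by_cases h' : b = b' <;> simp [h, h'] <;> ring

/-- Product states of the first basis vectors are separable. -/
lemma exists_sepState_s5 {d : ℕ} (hd : 2 ≤ d) :
    ∃ σ : Matrix (Fin d × Fin d) (Fin d × Fin d) ℂ, SepState σ := by
  have hρ : MatState (diagonal (Pi.single (⟨0, by omega⟩ : Fin d) (1 : ℂ))) := by
    refine ⟨posSemidef_diagonal_iff.2 fun i => ?_, ?_⟩
    · rw [Pi.single_apply]
      split_ifs <;> simp
    · simp [trace_diagonal]
  exact ⟨_, 1, fun _ => 1, fun _ => _, fun _ => _, fun _ => zero_le_one, by simp,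
    fun _ => hρ, fun _ => hρ, rfl⟩

/-- Eigenvalue lower bound for the weight-based measure of a Choi state. -/
theorem weight_measure_eigenvalue_lower_bound {d : ℕ} (hd : 2 ≤ d)
    (J : Matrix (Fin d × Fin d) (Fin d × Fin d) ℂ) (hJ : MatState J)
    (hptr : ∀ i i' : Fin d, ∑ j : Fin d, J (i, j) (i', j) =
        if i = i' then ((d : ℂ))⁻¹ else 0) :
    ((d : ℝ) * (⨆ k, hJ.1.1.eigenvalues k) - 1) / ((d : ℝ) ^ 2 - 1) ≤ Cw J := by
  have hd' : (2 : ℝ) ≤ d := by exact_mod_cast hd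
  unfold Cw
  -- `s = 1` is always feasible, so the infimum is not over the empty set (where it would be `0`).
  apply le_csInf
  · obtain ⟨σ, hσ⟩ := exists_sepState_s5 hd
    exact ⟨1, zero_le_one, le_rfl, σ, hσ, by simpa using hJ.1⟩
  · rintro s ⟨hs0, hs1, σ, hσ, hR⟩
    have : Nonempty (Fin d) := ⟨⟨0, by omega⟩⟩
    have hsup : (⨆ k, hJ.1.1.eigenvalues k) ≤ (d : ℝ)⁻¹ + s :=
      ciSup_le fun k => eigenvalues_le_of_smul_one_sub_posSemidef _
        (choi_le_of_weight hJ.2 hptr hs1 hσ hR) k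
    rw [div_le_iff₀ (by nlinarith)]
    have h1 : (d : ℝ) * (⨆ k, hJ.1.1.eigenvalues k) ≤ 1 + d * s := by
      calc _ ≤ (d : ℝ) * ((d : ℝ)⁻¹ + s) := by gcongr
        _ = _ := by field_simp
    have h2 : s * (d : ℝ) ≤ s * ((d : ℝ) ^ 2 - 1) :=
      mul_le_mul_of_nonneg_left (by nlinarith) hs0
    linarith
end
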